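/- Let q ≥ 2 be an integer and 0 < H < 1 − 1/(2q). Then (1/(−log ε)) · Σ_{n≥1} (1/n) · P(|V_n| > ε n) converges to 2 as ε → 0⁺ (Spitzer's theorem for the variations of fractional Brownian motion, central-limit regime). -/

import Mathlib

open MeasureTheory ProbabilityTheory Filter Real Topology

/-- A (centered) fractional Brownian motion with Hurst parameter `H`:
all finite-dimensional distributions are centered Gaussian (equivalently, every finite
linear combination of values of the process is a centered real Gaussian), with covariance
`E (B s * B t) = (s^(2H) + t^(2H) - |t-s|^(2H)) / 2` for nonnegative times. -/
structure IsFractionalBrownianMotion {Ω : Type*} [MeasureSpace Ω]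
    (B : ℝ → Ω → ℝ) (H : ℝ) : Prop where
  measurable : ∀ t : ℝ, Measurable (B t)
  gaussian_fdd : ∀ (n : ℕ) (t : Fin n → ℝ), (∀ i, 0 ≤ t i) → ∀ c : Fin n → ℝ,
    ∃ v : NNReal,
      Measure.map (fun ω => ∑ i, c i * B (t i) ω) (ℙ : Measure Ω) = gaussianReal 0 v
  covariance : ∀ s t : ℝ, 0 ≤ s → 0 ≤ t →
    ∫ ω, B s ω * B t ω ∂(ℙ : Measure Ω)
      = (s ^ (2 * H) + t ^ (2 * H) - |t - s| ^ (2 * H)) / 2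

/-- `V_n = ∑_{k=0}^{n-1} H_q (n^H (B_{(k+1)/n} - B_{k/n}))`, where `H_q` is the Hermite
polynomial of degree `q`. -/
noncomputable def hermiteVariation {Ω : Type*} [MeasureSpace Ω]
    (B : ℝ → Ω → ℝ) (H : ℝ) (q n : ℕ) (ω : Ω) : ℝ :=
  ∑ k ∈ Finset.range n,
    Polynomial.aeval
      ((n : ℝ) ^ H * (B (((k : ℝ) + 1) / n) ω - B ((k : ℝ) / n) ω))
      (Polynomial.hermite q)

/-!
Chebyshev's inequality, `P(|V n| > ε n) ≤ E (V n)² / (ε n)² ≲ 1 / (ε² n)`, makes the terms with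
`n ≫ ε⁻²` contribute `O(1)`. For `n ≪ ε⁻²` the threshold `ε n` is small compared with `√n`, the
order of the standard deviation of `V n`, so a small-ball estimate uniform in `n` puts
`P(|V n| > ε n)` close to `1`. Only the harmonic sum up to `ε⁻²`, of order `-2 log ε`, remains.

The variance of `V n` is `q! ∑ k l, ρ (k - l) ^ q` by orthogonality of Hermite polynomials, with `ρ`
the covariance of fractional Gaussian noise. It is at most of order `n` because
`|ρ j| ≲ |j| ^ (2 H - 2)` and `q (2 H - 2) < -1`. It is at least `n / 2` because `ρ j` with `j ≠ 0`
can be negative only if `H < 1 / 2`, and then `|ρ j| ≤ 1 / 2` and `∑ j ≥ 1, |ρ j| ≤ 1 / 2`.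

For the small-ball estimate, realise the Gaussian vector as `cos θ X + sin θ Y` with `X`, `Y`
independent copies of it: on this random ellipse a polynomial `F` of degree `q` is a trigonometric
polynomial of degree `q`. Let `p δ = P(|F| ≤ δ)` and take `K` equispaced angles `θ` in `[0, π)`. If
`|F| ≤ δ` at more than `2 q` of them, then a Remez inequality gives `|F| ≤ M δ` on the whole
ellipse, in particular at both of the independent points `X` and `Y`. Averaging over the angles,
`p δ ≤ 2 q / K + p (M δ) ^ 2` with `M` depending only on `q` and `K`. The same inequality compares
the `L²` and `L¹` norms of `F`, so by Paley–Zygmund `p` is bounded away from `1` near `0`, and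
iterating gives `p δ → 0` uniformly.
-/

open scoped Polynomial

/-- `f` is a real trigonometric polynomial of degree at most `d`, that is, a combination of
`cos (k θ)` and `sin (k θ)` with `k ≤ d`. This is encoded by requiring `e ^ (i d θ) f θ` to be a
polynomial of degree at most `2 d` in `e ^ (i θ)`, so that interpolation applies. -/
def IsTrigPolynomial (d : ℕ) (f : ℝ → ℝ) : Prop :=
  ∃ Q : ℂ[X], Q.natDegree ≤ 2 * d ∧
    ∀ θ : ℝ, Complex.exp (θ * Complex.I) ^ d * f θ = Q.eval (Complex.exp (θ * Complex.I))

namespace IsTrigPolynomial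

variable {d e : ℕ} {f g : ℝ → ℝ}

lemma const (d : ℕ) (c : ℝ) : IsTrigPolynomial d fun _ => c :=
  ⟨Polynomial.C (c : ℂ) * Polynomial.X ^ d,
    (Polynomial.natDegree_C_mul_X_pow_le _ _).trans (by lia),
    fun θ => by simpa using mul_comm _ _⟩

lemma cos_add_sin (a b : ℝ) : IsTrigPolynomial 1 fun θ => cos θ * a + sin θ * b := by
  refine ⟨Polynomial.C ((a - b * Complex.I) / 2) * Polynomial.X ^ 2
    + Polynomial.C ((a + b * Complex.I) / 2), by compute_degree, fun θ => ?_⟩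
  have hI : Complex.I ^ 2 = -1 := Complex.I_sq
  have hcs : Complex.cos θ ^ 2 + Complex.sin θ ^ 2 = 1 := by
    rw [add_comm]; exact Complex.sin_sq_add_cos_sq θ
  simp only [Complex.exp_mul_I, Complex.ofReal_add, Complex.ofReal_mul, Complex.ofReal_cos,
    Complex.ofReal_sin, Polynomial.eval_add, Polynomial.eval_mul, Polynomial.eval_C,
    Polynomial.eval_pow, Polynomial.eval_X, pow_one]
  grind

lemma add (hf : IsTrigPolynomial d f) (hg : IsTrigPolynomial d g) :
    IsTrigPolynomial d fun θ => f θ + g θ := by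
  obtain ⟨P, hPd, hP⟩ := hf
  obtain ⟨Q, hQd, hQ⟩ := hg
  exact ⟨P + Q, Polynomial.natDegree_add_le_of_degree_le hPd hQd,
    fun θ => by simp [← hP, ← hQ, mul_add]⟩

lemma mul (hf : IsTrigPolynomial d f) (hg : IsTrigPolynomial e g) :
    IsTrigPolynomial (d + e) fun θ => f θ * g θ := by
  obtain ⟨P, hPd, hP⟩ := hf
  obtain ⟨Q, hQd, hQ⟩ := hg
  refine ⟨P * Q, Polynomial.natDegree_mul_le.trans (by lia), fun θ => ?_⟩
  rw [Polynomial.eval_mul, ← hP, ← hQ]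
  push_cast
  ring

lemma mono (hde : d ≤ e) (hf : IsTrigPolynomial d f) : IsTrigPolynomial e f := by
  simpa [Nat.add_sub_cancel' hde] using hf.mul (const (e - d) 1)

lemma pow (hf : IsTrigPolynomial 1 f) (k : ℕ) : IsTrigPolynomial k fun θ => f θ ^ k := by
  induction k with
  | zero => simpa using const 0 1
  | succ k ih => simpa only [pow_succ] using ih.mul hf

lemma sum {ι : Type*} (s : Finset ι) {f : ι → ℝ → ℝ} (hf : ∀ i ∈ s, IsTrigPolynomial d (f i)) :
    IsTrigPolynomial d fun θ => ∑ i ∈ s, f i θ := by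
  classical
  induction s using Finset.induction_on with
  | empty => simpa using const d 0
  | insert i s his ih =>
    simp only [Finset.sum_insert his]
    exact (hf i (s.mem_insert_self i)).add (ih fun j hj => hf j (Finset.mem_insert_of_mem hj))

lemma polynomial_eval (hf : IsTrigPolynomial 1 f) (p : ℝ[X]) :
    IsTrigPolynomial p.natDegree fun θ => p.eval (f θ) := by
  simp only [Polynomial.eval_eq_sum_range]
  refine sum _ fun i hi => ?_
  exact ((const 0 _).mul (hf.pow i)).mono (by simpa [Nat.lt_succ_iff] using hi)

end IsTrigPolynomial

section Remez

/-- Lagrange interpolation at the points of `S`, with the supremum of the basis polynomials on `K`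
bounded by compactness. -/
lemma exists_norm_eval_le_of_nodes {𝕜 ι : Type*} [NormedField 𝕜] {K : Set 𝕜} (hK : IsCompact K)
    {S : Finset ι} {v : ι → 𝕜} (hv : Set.InjOn v S) :
    ∃ M : ℝ, ∀ Q : 𝕜[X], Q.natDegree < S.card → ∀ δ : ℝ, (∀ i ∈ S, ‖Q.eval (v i)‖ ≤ δ) →
      ∀ z ∈ K, ‖Q.eval z‖ ≤ M * δ := by
  classical
  have hbasis (i : ι) : ∃ C, ∀ z ∈ K, ‖(Lagrange.basis S v i).eval z‖ ≤ C :=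
    hK.exists_bound_of_continuousOn (Lagrange.basis S v i).continuousOn
  choose C hC using hbasis
  refine ⟨∑ i ∈ S, C i, fun Q hQ δ hδ z hz => ?_⟩
  have hinterp : Q = ∑ i ∈ S, Polynomial.C (Q.eval (v i)) * Lagrange.basis S v i := by
    rw [← Lagrange.interpolate_apply]
    exact Lagrange.eq_interpolate hv
      (Polynomial.degree_le_natDegree.trans_lt (by exact_mod_cast hQ))
  calc ‖Q.eval z‖
      = ‖∑ i ∈ S, Q.eval (v i) * (Lagrange.basis S v i).eval z‖ := by
        conv_lhs => rw [hinterp]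
        simp [Polynomial.eval_finsetSum]
    _ ≤ ∑ i ∈ S, δ * C i :=
        norm_sum_le_of_le _ fun i hi => (norm_mul_le _ _).trans <|
          mul_le_mul (hδ i hi) (hC i z hz) (norm_nonneg _) ((norm_nonneg _).trans (hδ i hi))
    _ = (∑ i ∈ S, C i) * δ := by rw [← Finset.mul_sum, mul_comm]

/-- A discrete Remez inequality. -/
lemma IsTrigPolynomial.exists_forall_abs_le {ι : Type*} {T : Finset ι} {φ : ι → ℝ}
    (hφ : Set.InjOn (fun i => Complex.exp (φ i * Complex.I)) T) (d : ℕ) :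
    ∃ M : ℝ, 0 < M ∧ ∀ f, IsTrigPolynomial d f → ∀ S ⊆ T, 2 * d < S.card →
      ∀ δ, (∀ i ∈ S, |f (φ i)| ≤ δ) → ∀ θ, |f θ| ≤ M * δ := by
  have hnodes (S : Finset ι) (hS : S ∈ T.powerset) := exists_norm_eval_le_of_nodes
    (isCompact_sphere (0 : ℂ) 1) (hφ.mono (Finset.coe_subset.2 (Finset.mem_powerset.1 hS)))
  choose! M hM using hnodes
  obtain ⟨M', hM'⟩ := (T.powerset.image M).exists_le
  refine ⟨max M' 1, by positivity, fun f ⟨Q, hQd, hQ⟩ S hST hS δ hδ θ => ?_⟩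
  have hnorm (θ : ℝ) : |f θ| = ‖Q.eval (Complex.exp (θ * Complex.I))‖ := by
    simp [← hQ, Complex.norm_exp_ofReal_mul_I]
  obtain ⟨i, hi⟩ : S.Nonempty := Finset.card_pos.1 (by lia)
  have hδ0 : 0 ≤ δ := (abs_nonneg _).trans (hδ i hi)
  have hS' := Finset.mem_powerset.2 hST
  calc |f θ| ≤ M S * δ := by
        rw [hnorm]
        exact hM S hS' Q (by lia) δ (fun i hi => hnorm (φ i) ▸ hδ i hi) _
          (by simp [Complex.norm_exp_ofReal_mul_I])
    _ ≤ max M' 1 * δ := by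
        gcongr
        exact (hM' _ (Finset.mem_image_of_mem M hS')).trans (le_max_left _ _)

lemma injOn_exp_equispaced (K : ℕ) :
    Set.InjOn (fun j : ℕ => Complex.exp ((π * j / K : ℝ) * Complex.I)) (Finset.range K) := by
  intro i hi j hj hij
  have hmem {k : ℕ} (hk : k ∈ (Finset.range K : Set ℕ)) : π * k / K ∈ Set.Icc 0 π := by
    have hkK : (k : ℝ) < K := by simpa using hk
    exact ⟨by positivity, by rw [div_le_iff₀ ((Nat.cast_nonneg k).trans_lt hkK)]; gcongr⟩
  have hK : (K : ℝ) ≠ 0 := by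
    rintro h
    simp_all
  have hcos := congrArg Complex.re hij
  simp only [Complex.exp_ofReal_mul_I_re] at hcos
  have := injOn_cos (hmem hi) (hmem hj) hcos
  field_simp at this
  exact_mod_cast this

/-- In each pair `{j, j + N}` the smaller of the two values is at most `√(g j * g (j + N))`. -/
lemma exists_subset_range_forall_le_sqrt_sum_mul {g : ℕ → ℝ} (hg : ∀ j, 0 ≤ g j) (N : ℕ) :
    ∃ S ⊆ Finset.range (2 * N), S.card = N ∧
      ∀ i ∈ S, g i ≤ √(∑ j ∈ Finset.range N, g j * g (j + N)) := by
  let smaller : ℕ → ℕ := fun j => if g j ≤ g (j + N) then j else j + N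
  have hinj : Set.InjOn smaller (Finset.range N) := by
    intro i hi j hj hij
    simp only [Finset.coe_range, Set.mem_Iio, smaller] at hi hj hij
    split_ifs at hij <;> lia
  refine ⟨(Finset.range N).image smaller, ?_, ?_, Finset.forall_mem_image.2 fun j hj => ?_⟩
  · simp only [Finset.image_subset_iff, Finset.mem_range, smaller]
    intro j hj
    split_ifs <;> lia
  · rw [Finset.card_image_of_injOn hinj, Finset.card_range]
  · have hterm : g j * g (j + N) ≤ ∑ j ∈ Finset.range N, g j * g (j + N) :=
      Finset.single_le_sum (f := fun j => g j * g (j + N))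
        (fun _ _ => mul_nonneg (hg _) (hg _)) hj
    refine le_sqrt_of_sq_le (le_trans ?_ hterm)
    rw [sq]
    by_cases h : g j ≤ g (j + N)
    · simpa only [smaller, if_pos h] using mul_le_mul_of_nonneg_left h (hg j)
    · simpa only [smaller, if_neg h] using mul_le_mul_of_nonneg_right (not_le.1 h).le (hg _)

lemma IsTrigPolynomial.exists_sq_le_sum_mul (d : ℕ) :
    ∃ C : ℝ, 0 < C ∧ ∃ φ : ℕ → ℝ, ∀ f, IsTrigPolynomial d f → ∀ θ,
      f θ ^ 2 ≤ C * ∑ j ∈ Finset.range (2 * d + 1), |f (φ j)| * |f (φ j + π / 2)| := by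
  set N := 2 * d + 1
  obtain ⟨M, hM, hremez⟩ :=
    exists_forall_abs_le (T := Finset.range (2 * N)) (injOn_exp_equispaced _) d
  set φ : ℕ → ℝ := fun j => π * j / (2 * N : ℕ) with hφ
  refine ⟨M ^ 2, by positivity, φ, fun f hf θ => ?_⟩
  have hquarter (j : ℕ) : φ j + π / 2 = φ (j + N) := by
    have : (N : ℝ) ≠ 0 := by positivity
    simp only [hφ]; push_cast; field_simp
  simp only [hquarter]
  set s := ∑ j ∈ Finset.range N, |f (φ j)| * |f (φ (j + N))|
  obtain ⟨S, hSsub, hScard, hS⟩ :=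
    exists_subset_range_forall_le_sqrt_sum_mul (fun j => abs_nonneg (f (φ j))) N
  have hbound : |f θ| ≤ M * √s :=
    hremez f hf S hSsub (hScard ▸ Nat.lt_succ_self (2 * d)) _ hS θ
  have hs : 0 ≤ s := Finset.sum_nonneg fun _ _ => by positivity
  calc f θ ^ 2 = |f θ| ^ 2 := (sq_abs _).symm
    _ ≤ (M * √s) ^ 2 := by gcongr
    _ = M ^ 2 * s := by rw [mul_pow, sq_sqrt hs]

end Remez

section SmallBall

lemma le_mul_sq_add_inv {a : ℝ} (ha : 0 < a) (x : ℝ) : x ≤ a * x ^ 2 + (4 * a)⁻¹ := by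
  have hsq : 0 ≤ (2 * a * x - 1) ^ 2 / (4 * a) := by positivity
  have hexpand : (2 * a * x - 1) ^ 2 / (4 * a) = a * x ^ 2 + (4 * a)⁻¹ - x := by
    field_simp; ring
  linarith

/-- Paley–Zygmund inequality, with the first moment in place of the second. -/
lemma measureReal_abs_le_le_of_le_integral_abs {Ω : Type*} [MeasurableSpace Ω] {P : Measure Ω}
    [IsProbabilityMeasure P] {X : Ω → ℝ} (hXm : Measurable X) (hX : MemLp X 2 P) {κ σ : ℝ}
    (hκ : 0 < κ) (hσ : 0 < σ) (hsq : ∫ ω, X ω ^ 2 ∂P = σ ^ 2) (habs : 3 * κ * σ ≤ ∫ ω, |X ω| ∂P) :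
    P.real {ω | |X ω| ≤ κ * σ} ≤ 1 - 4 * κ ^ 2 := by
  set A := {ω | |X ω| ≤ κ * σ}
  have hA : MeasurableSet A := measurableSet_le (by fun_prop) (by fun_prop)
  have hpoint (ω : Ω) :
      |X ω| ≤ (κ * σ + κ / σ * X ω ^ 2) + Aᶜ.indicator (fun _ => (4 * (κ / σ))⁻¹) ω := by
    by_cases hω : ω ∈ A
    · have h : |X ω| ≤ κ * σ := hω
      have : 0 ≤ κ / σ * X ω ^ 2 := by positivity
      simpa [hω] using by linarith
    · have : 0 < κ * σ := by positivity
      have hamgm := le_mul_sq_add_inv (div_pos hκ hσ) |X ω|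
      rw [sq_abs] at hamgm
      rw [Set.indicator_of_mem hω]
      linarith
  have hi₁ : Integrable (fun ω => κ * σ + κ / σ * X ω ^ 2) P :=
    (integrable_const _).add (hX.integrable_sq.const_mul _)
  have hi₂ : Integrable (Aᶜ.indicator fun _ => (4 * (κ / σ))⁻¹) P :=
    (integrable_const _).indicator hA.compl
  have hint : ∫ ω, |X ω| ∂P
      ≤ (κ * σ + κ / σ * σ ^ 2) + (1 - P.real A) * (4 * (κ / σ))⁻¹ := by
    refine (integral_mono (hX.integrable one_le_two).abs (hi₁.add hi₂) hpoint).trans_eq ?_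
    rw [integral_add' hi₁ hi₂, integral_add (integrable_const _) (hX.integrable_sq.const_mul _),
      integral_const, integral_const_mul, hsq, integral_indicator_const _ hA.compl,
      probReal_compl_eq_one_sub hA]
    simp
  have hσκ : κ * σ ≤ (1 - P.real A) * (4 * (κ / σ))⁻¹ := by
    have : κ / σ * σ ^ 2 = κ * σ := by field_simp
    linarith
  field_simp at hσκ
  linarith

lemma sum_measureReal_le_of_card_le {Ω ι : Type*} [MeasurableSpace Ω] {P : Measure Ω}
    [IsProbabilityMeasure P] {T : Finset ι} {A : ι → Set Ω} (hA : ∀ i, MeasurableSet (A i))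
    {B : Set Ω} (hB : MeasurableSet B) {m : ℕ}
    (hcard : ∀ ω, ω ∉ B → ∀ S ⊆ T, (∀ i ∈ S, ω ∈ A i) → S.card ≤ m) :
    ∑ i ∈ T, P.real (A i) ≤ m + T.card * P.real B := by
  classical
  have hpoint (ω : Ω) : ∑ i ∈ T, (A i).indicator (fun _ => (1 : ℝ)) ω
      ≤ m + B.indicator (fun _ => (T.card : ℝ)) ω := by
    have hsum : ∑ i ∈ T, (A i).indicator (fun _ => (1 : ℝ)) ω = (T.filter (ω ∈ A ·)).card := by
      simp [Set.indicator_apply]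
    rw [hsum]
    by_cases hω : ω ∈ B
    · simp only [Set.indicator_of_mem hω]
      exact_mod_cast (Finset.card_filter_le _ _).trans (Nat.le_add_left _ _)
    · simpa [hω] using hcard ω hω _ (T.filter_subset _) (by simp)
  have hi (i : ι) : Integrable ((A i).indicator fun _ => (1 : ℝ)) P :=
    (integrable_const _).indicator (hA i)
  have hiB : Integrable (B.indicator fun _ => (T.card : ℝ)) P := (integrable_const _).indicator hB
  have hmono := integral_mono (integrable_finsetSum T fun i _ => hi i)
    ((integrable_const (m : ℝ)).add hiB) hpoint
  rw [integral_finsetSum _ fun i _ => hi i] at hmono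
  simpa [integral_add (integrable_const (m : ℝ)) hiB, integral_indicator_const, hA, hB,
    mul_comm] using hmono

/-- The infimum `L` of the bounds that are eventually valid satisfies `L ≤ L ^ 2` and `L < 1`. -/
lemma exists_forall_le_of_forall_le_add_sq {M : ℕ → ℝ} (hM : ∀ K, 0 < M K) {a κ c τ : ℝ}
    (ha0 : 0 ≤ a) (ha1 : a < 1) (hκ : 0 < κ) (hτ : 0 < τ) :
    ∃ δ : ℝ, 0 < δ ∧ ∀ p : ℝ → ℝ, (∀ δ, 0 ≤ p δ) → p κ ≤ a →
      (∀ K : ℕ, 0 < K → ∀ δ, p δ ≤ c / K + p (M K * δ) ^ 2) → p δ ≤ τ := by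
  let U : Set ℝ := {u | 0 ≤ u ∧ ∃ δ : ℝ, 0 < δ ∧ ∀ p : ℝ → ℝ, (∀ δ, 0 ≤ p δ) → p κ ≤ a →
    (∀ K : ℕ, 0 < K → ∀ δ, p δ ≤ c / K + p (M K * δ) ^ 2) → p δ ≤ u}
  have haU : a ∈ U := ⟨ha0, κ, hκ, fun p _ hpa _ => hpa⟩
  have hstep : ∀ u ∈ U, ∀ η > 0, u ^ 2 + η ∈ U := by
    rintro u ⟨-, δ, hδ, hu⟩ η hη
    obtain ⟨K, hK⟩ := exists_nat_gt (max (c / η) 0)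
    have hK0 : (0 : ℝ) < K := (le_max_right _ _).trans_lt hK
    refine ⟨by positivity, δ / M K, div_pos hδ (hM K), fun p hp0 hpa hp => ?_⟩
    have hcK : c / K ≤ η := by
      rw [div_le_comm₀ hK0 hη]
      exact (le_max_left _ _).trans hK.le
    have hsq : p (M K * (δ / M K)) ^ 2 ≤ u ^ 2 := by
      rw [mul_div_cancel₀ _ (hM K).ne']
      exact pow_le_pow_left₀ (hp0 δ) (hu p hp0 hpa hp) 2
    linarith [hp K (by exact_mod_cast hK0) (δ / M K)]
  have hbdd : BddBelow U := ⟨0, fun u hu => hu.1⟩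
  have hL : sInf U ≤ 0 := by
    by_contra! hpos
    have hL1 : sInf U < 1 := (csInf_le hbdd haU).trans_lt ha1
    obtain ⟨u, huU, hu⟩ := exists_lt_of_csInf_lt ⟨a, haU⟩
      ((Real.lt_sqrt hpos.le).2 (pow_lt_self_of_lt_one₀ hpos hL1 one_lt_two))
    have hlt : u ^ 2 < sInf U := (Real.lt_sqrt huU.1).1 hu
    linarith [csInf_le hbdd (hstep u huU ((sInf U - u ^ 2) / 2) (by linarith))]
  obtain ⟨u, ⟨-, δ, hδ, hu⟩, huτ⟩ := exists_lt_of_csInf_lt ⟨a, haU⟩ (hL.trans_lt hτ)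
  exact ⟨δ, hδ, fun p hp0 hpa hp => (hu p hp0 hpa hp).trans huτ.le⟩

/-- `F` is a trigonometric polynomial of degree at most `d` along every centered ellipse. Polynomial
functions of degree at most `d` have this property, which is all that the rotation argument uses. -/
def IsTrigOnEllipses {E : Type*} [AddCommGroup E] [Module ℝ E] (d : ℕ) (F : E → ℝ) : Prop :=
  ∀ x y : E, IsTrigPolynomial d fun θ => F (cos θ • x + sin θ • y)

lemma exists_integral_sq_le_sq_integral_abs (d : ℕ) :
    ∃ C : ℝ, 0 < C ∧ ∀ {E : Type*} [SeminormedAddCommGroup E] [NormedSpace ℝ E]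
      [SecondCountableTopology E] [MeasurableSpace E] [BorelSpace E] {μ : Measure E}
      [IsProbabilityMeasure μ] {F : E → ℝ},
      (∀ θ, (μ.prod μ).map (ContinuousLinearMap.rotation θ) = μ.prod μ) →
      IsTrigOnEllipses d F → Integrable F μ →
      ∫ x, F x ^ 2 ∂μ ≤ C * (∫ x, |F x| ∂μ) ^ 2 := by
  obtain ⟨C, hC, φ, hφ⟩ := IsTrigPolynomial.exists_sq_le_sum_mul d
  refine ⟨C * (2 * d + 1 : ℕ), by positivity, fun {E} _ _ _ _ _ μ _ F hμ hF hFi => ?_⟩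
  let G : E × E → ℝ := fun p => |F p.1| * |F p.2|
  have hG : Integrable G (μ.prod μ) := hFi.abs.mul_prod hFi.abs
  have hrot (θ : ℝ) : MeasurePreserving (ContinuousLinearMap.rotation θ) (μ.prod μ) (μ.prod μ) :=
    ⟨(ContinuousLinearMap.rotation θ).continuous.measurable, hμ θ⟩
  have hGrot (θ : ℝ) : Integrable (fun p => G (ContinuousLinearMap.rotation θ p)) (μ.prod μ) :=
    (hrot θ).integrable_comp_of_integrable hG
  have hpoint (p : E × E) : F p.1 ^ 2 ≤ C * ∑ j ∈ Finset.range (2 * d + 1),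
      G (ContinuousLinearMap.rotation (φ j) p) := by
    simpa [G, ContinuousLinearMap.rotation_apply, cos_add_pi_div_two, sin_add_pi_div_two]
      using hφ _ (hF p.1 p.2) 0
  calc ∫ x, F x ^ 2 ∂μ = ∫ p, F p.1 ^ 2 ∂(μ.prod μ) := by
        simp [integral_fun_fst (μ := μ) (ν := μ) (fun x => F x ^ 2)]
    _ ≤ ∫ p, C * ∑ j ∈ Finset.range (2 * d + 1),
          G (ContinuousLinearMap.rotation (φ j) p) ∂(μ.prod μ) :=
        integral_mono_of_nonneg (ae_of_all _ fun _ => sq_nonneg _)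
          ((integrable_finsetSum _ fun j _ => hGrot (φ j)).const_mul C) (ae_of_all _ hpoint)
    _ = C * ∑ _j ∈ Finset.range (2 * d + 1), ∫ p, |F p.1| * |F p.2| ∂(μ.prod μ) := by
        rw [integral_const_mul, integral_finsetSum _ fun j _ => hGrot (φ j)]
        congr! 2
        rw [← integral_map (hrot _).aemeasurable (by rw [hμ]; exact hG.1), hμ]
    _ = C * (2 * d + 1 : ℕ) * (∫ x, |F x| ∂μ) ^ 2 := by
        rw [integral_prod_mul (fun x => |F x|) (fun x => |F x|), Finset.sum_const,
          Finset.card_range, nsmul_eq_mul]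
        ring

lemma exists_measureReal_abs_le_le_add_sq (d K : ℕ) :
    ∃ M : ℝ, 0 < M ∧ ∀ {E : Type*} [SeminormedAddCommGroup E] [NormedSpace ℝ E]
      [SecondCountableTopology E] [MeasurableSpace E] [BorelSpace E] {μ : Measure E}
      [IsProbabilityMeasure μ] {F : E → ℝ},
      (∀ θ, (μ.prod μ).map (ContinuousLinearMap.rotation θ) = μ.prod μ) →
      IsTrigOnEllipses d F → Measurable F → 0 < K → ∀ δ,
      μ.real {x | |F x| ≤ δ} ≤ 2 * d / K + μ.real {x | |F x| ≤ M * δ} ^ 2 := by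
  obtain ⟨M, hM, hremez⟩ := IsTrigPolynomial.exists_forall_abs_le (injOn_exp_equispaced K) d
  refine ⟨M, hM, fun {E} _ _ _ _ _ μ _ F hμ hF hFm hK δ => ?_⟩
  have hlevel (r : ℝ) : MeasurableSet {x | |F x| ≤ r} :=
    measurableSet_le (by fun_prop) (by fun_prop)
  let R (j : ℕ) : E × E → E × E := ContinuousLinearMap.rotation (π * j / K)
  have hR (j : ℕ) : MeasurePreserving (R j) (μ.prod μ) (μ.prod μ) :=
    ⟨(ContinuousLinearMap.rotation _).continuous.measurable, hμ _⟩
  let A (j : ℕ) : Set (E × E) := R j ⁻¹' (Prod.fst ⁻¹' {x | |F x| ≤ δ})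
  have hA (j : ℕ) : MeasurableSet (A j) := (hR j).measurable (measurable_fst (hlevel δ))
  have hAμ (j : ℕ) : (μ.prod μ).real (A j) = μ.real {x | |F x| ≤ δ} :=
    (measurePreserving_fst.comp (hR j)).measureReal_preimage (hlevel δ).nullMeasurableSet
  let B : Set (E × E) := {x | |F x| ≤ M * δ} ×ˢ {x | |F x| ≤ M * δ}
  have hcard (p : E × E) (hp : p ∉ B) (S : Finset ℕ) (hS : S ⊆ Finset.range K)
      (hSA : ∀ j ∈ S, p ∈ A j) : S.card ≤ 2 * d := by
    by_contra! hSd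
    have hle := hremez _ (hF p.1 p.2) S hS hSd δ hSA
    exact hp ⟨by simpa using hle 0, by simpa using hle (π / 2)⟩
  have hsum := sum_measureReal_le_of_card_le (P := μ.prod μ) hA
    ((hlevel (M * δ)).prod (hlevel (M * δ))) hcard
  simp only [hAμ, measureReal_prod_prod, Finset.sum_const, Finset.card_range, nsmul_eq_mul,
    Nat.cast_mul, Nat.cast_ofNat] at hsum
  have hK' : (0 : ℝ) < K := by exact_mod_cast hK
  rw [div_add' _ _ _ hK'.ne', le_div_iff₀ hK']
  linarith

/-- The invariance of `μ.prod μ` under rotations holds for every centered Gaussian measure `μ`. -/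
theorem exists_forall_measureReal_abs_le_le (d : ℕ) {τ : ℝ} (hτ : 0 < τ) :
    ∃ δ : ℝ, 0 < δ ∧ ∀ {E : Type*} [SeminormedAddCommGroup E] [NormedSpace ℝ E]
      [SecondCountableTopology E] [MeasurableSpace E] [BorelSpace E] {μ : Measure E}
      [IsProbabilityMeasure μ] {F : E → ℝ},
      (∀ θ, (μ.prod μ).map (ContinuousLinearMap.rotation θ) = μ.prod μ) →
      IsTrigOnEllipses d F → Measurable F → MemLp F 2 μ → ∀ σ > 0, ∫ x, F x ^ 2 ∂μ = σ ^ 2 →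
      μ.real {x | |F x| ≤ δ * σ} ≤ τ := by
  obtain ⟨C, hC, hnorm⟩ := exists_integral_sq_le_sq_integral_abs d
  choose M hM hstep using exists_measureReal_abs_le_le_add_sq d
  set κ : ℝ := (3 * √C)⁻¹ ⊓ 2⁻¹
  have hκ : 0 < κ := by positivity
  have hκ' : κ ≤ 2⁻¹ := inf_le_right
  obtain ⟨δ, hδ, hsmall⟩ := exists_forall_le_of_forall_le_add_sq hM (a := 1 - 4 * κ ^ 2) (κ := κ)
    (c := 2 * d) (by nlinarith) (by nlinarith) hκ hτ
  refine ⟨δ, hδ, fun {E} _ _ _ _ _ μ _ F hμ hF hFm hF2 σ hσ hsq => ?_⟩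
  refine hsmall (fun δ => μ.real {x | |F x| ≤ δ * σ}) (fun _ => measureReal_nonneg) ?_ ?_
  · refine measureReal_abs_le_le_of_le_integral_abs hFm hF2 hκ hσ hsq ?_
    have habs : σ ≤ √C * ∫ x, |F x| ∂μ := by
      refine le_of_sq_le_sq ?_ (by positivity)
      rw [mul_pow, sq_sqrt hC.le, ← hsq]
      exact hnorm hμ hF (hF2.integrable one_le_two)
    calc 3 * κ * σ ≤ 3 * (3 * √C)⁻¹ * (√C * ∫ x, |F x| ∂μ) := by
          gcongr
          exact inf_le_left
      _ = ∫ x, |F x| ∂μ := by field_simp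
  · intro K hK δ
    simpa only [mul_assoc] using hstep K hμ hF hFm hK (δ * σ)

end SmallBall

section Hermite

lemma integrable_polynomial_eval_gaussianReal (p : ℝ[X]) :
    Integrable (fun x => p.eval x) (gaussianReal 0 1) := by
  simp_rw [Polynomial.eval_eq_sum_range]
  refine integrable_finsetSum _ fun k _ => Integrable.const_mul ?_ _
  have hk := (memLp_id_gaussianReal' (μ := 0) (v := 1) (k : ENNReal) (by simp)).integrable_norm_pow'
  exact (integrable_norm_iff (by fun_prop)).1 (by simpa using hk)

lemma memLp_two_polynomial_eval_gaussianReal (p : ℝ[X]) :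
    MemLp (fun x => p.eval x) 2 (gaussianReal 0 1) := by
  rw [memLp_two_iff_integrable_sq (by fun_prop)]
  simp_rw [← Polynomial.eval_pow]
  exact integrable_polynomial_eval_gaussianReal _

lemma integrable_polynomial_eval_mul_gaussianPDFReal (p : ℝ[X]) :
    Integrable fun x => p.eval x * gaussianPDFReal 0 1 x := by
  have h := integrable_polynomial_eval_gaussianReal p
  rw [gaussianReal_of_var_ne_zero _ one_ne_zero,
    integrable_withDensity_iff_integrable_smul' (measurable_gaussianPDF 0 1)
      (by simp [gaussianPDF_lt_top])] at h
  simpa [toReal_gaussianPDF, mul_comm] using h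

lemma hasDerivAt_gaussianPDFReal_zero_one (x : ℝ) :
    HasDerivAt (gaussianPDFReal 0 1) (-x * gaussianPDFReal 0 1 x) x := by
  have hpdf : gaussianPDFReal 0 1 = fun x => (√(2 * π))⁻¹ * rexp (-x ^ 2 / 2) := by
    ext x
    simp [gaussianPDFReal]
  rw [hpdf]
  have hsq : HasDerivAt (fun x : ℝ => -x ^ 2 / 2) (-x) x :=
    ((hasDerivAt_pow 2 x).neg.div_const 2).congr_deriv (by norm_num; ring)
  exact (hsq.exp.const_mul (√(2 * π))⁻¹).congr_deriv (by ring)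

lemma integral_id_mul_gaussianReal (p : ℝ[X]) :
    ∫ x, x * p.eval x ∂(gaussianReal 0 1) = ∫ x, p.derivative.eval x ∂(gaussianReal 0 1) := by
  have hparts := integral_mul_deriv_eq_deriv_mul_of_integrable
    (fun x _ => p.hasDerivAt x) (fun x _ => hasDerivAt_gaussianPDFReal_zero_one x)
    (by
      refine (integrable_polynomial_eval_mul_gaussianPDFReal (-(p * Polynomial.X))).congr
        (ae_of_all _ fun x => ?_)
      simp only [Polynomial.eval_neg, Polynomial.eval_mul, Polynomial.eval_X, Pi.mul_apply]
      ring)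
    (integrable_polynomial_eval_mul_gaussianPDFReal _)
    (integrable_polynomial_eval_mul_gaussianPDFReal _)
  have hneg (x : ℝ) : gaussianPDFReal 0 1 x • (x * p.eval x)
      = -(p.eval x * (-x * gaussianPDFReal 0 1 x)) := by rw [smul_eq_mul]; ring
  simp_rw [integral_gaussianReal_eq_integral_smul one_ne_zero, hneg, integral_neg, hparts, neg_neg,
    smul_eq_mul, mul_comm]

lemma integral_hermite_mul_gaussianReal (q : ℕ) (p : ℝ[X]) :
    ∫ x, Polynomial.aeval x (Polynomial.hermite q) * p.eval x ∂(gaussianReal 0 1)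
      = ∫ x, (Polynomial.derivative^[q] p).eval x ∂(gaussianReal 0 1) := by
  induction q generalizing p with
  | zero => simp
  | succ q ih =>
    set h : ℝ[X] := (Polynomial.hermite q).map (Int.castRingHom ℝ) with hh
    have hsucc (x : ℝ) : Polynomial.aeval x (Polynomial.hermite (q + 1)) * p.eval x
        = x * (h * p).eval x - (h.derivative * p).eval x := by
      simp only [Polynomial.hermite_succ, hh, Polynomial.derivative_map, Polynomial.eval_mul,
        Polynomial.eval_map_algebraMap, ← algebraMap_int_eq, map_sub, map_mul, Polynomial.aeval_X]
      ring
    have hi (p : ℝ[X]) := integrable_polynomial_eval_gaussianReal p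
    have hX : Integrable (fun x => x * (h * p).eval x) (gaussianReal 0 1) := by
      convert hi (Polynomial.X * (h * p)) using 2 with x
      rw [Polynomial.eval_mul (p := Polynomial.X), Polynomial.eval_X]
    calc ∫ x, Polynomial.aeval x (Polynomial.hermite (q + 1)) * p.eval x ∂(gaussianReal 0 1)
        = ∫ x, (h * p).derivative.eval x - (h.derivative * p).eval x ∂(gaussianReal 0 1) := by
          simp_rw [hsucc]
          rw [integral_sub hX (hi _), integral_id_mul_gaussianReal, ← integral_sub (hi _) (hi _)]
      _ = ∫ x, Polynomial.aeval x (Polynomial.hermite q) * p.derivative.eval x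
            ∂(gaussianReal 0 1) := by
          simp [hh, Polynomial.derivative_mul, ← algebraMap_int_eq, Polynomial.eval_map_algebraMap]
      _ = _ := by rw [ih, Function.iterate_succ_apply]

lemma iterate_derivative_comp_linear {R : Type*} [CommSemiring R] (p : R[X]) (a b : R) (k : ℕ) :
    Polynomial.derivative^[k] (p.comp (Polynomial.C a * Polynomial.X + Polynomial.C b))
      = Polynomial.C (a ^ k)
        * (Polynomial.derivative^[k] p).comp (Polynomial.C a * Polynomial.X + Polynomial.C b) := by
  induction k with
  | zero => simp
  | succ k ih =>
    simp only [Function.iterate_succ_apply', ih, Polynomial.derivative_C_mul,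
      Polynomial.derivative_comp, Polynomial.derivative_add, Polynomial.derivative_X,
      Polynomial.derivative_C, pow_succ, map_mul]
    ring

lemma iterate_derivative_hermite (q : ℕ) :
    Polynomial.derivative^[q] (Polynomial.hermite q) = Polynomial.C (q.factorial : ℤ) := by
  rw [Polynomial.eq_C_of_natDegree_eq_zero
    (p := Polynomial.derivative^[q] (Polynomial.hermite q)) (by
      have := Polynomial.natDegree_iterate_derivative (Polynomial.hermite q) q
      simpa using this), Polynomial.coeff_iterate_derivative]
  simp [Polynomial.coeff_hermite_self, Nat.descFactorial_self]

lemma integral_hermite_mul_hermite_linear (q : ℕ) (a b : ℝ) :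
    ∫ x, Polynomial.aeval x (Polynomial.hermite q)
        * Polynomial.aeval (a * x + b) (Polynomial.hermite q) ∂(gaussianReal 0 1)
      = q.factorial * a ^ q := by
  have h := integral_hermite_mul_gaussianReal q
    (((Polynomial.hermite q).map (Int.castRingHom ℝ)).comp
      (Polynomial.C a * Polynomial.X + Polynomial.C b))
  rw [iterate_derivative_comp_linear, Polynomial.iterate_derivative_map,
    iterate_derivative_hermite] at h
  rw [mul_comm (q.factorial : ℝ)]
  simpa [← algebraMap_int_eq, Polynomial.eval_map_algebraMap] using h

lemma memLp_two_hermite {Ω : Type*} [MeasurableSpace Ω] {P : Measure Ω} {X : Ω → ℝ}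
    (hX : HasLaw X (gaussianReal 0 1) P) (q : ℕ) :
    MemLp (fun ω => Polynomial.aeval (X ω) (Polynomial.hermite q)) 2 P := by
  have h := memLp_two_polynomial_eval_gaussianReal ((Polynomial.hermite q).map (Int.castRingHom ℝ))
  simp_rw [← algebraMap_int_eq, Polynomial.eval_map_algebraMap] at h
  rw [← hX.map_eq] at h
  exact h.comp_of_map hX.aemeasurable

lemma integral_hermite_mul_hermite {Ω : Type*} [MeasurableSpace Ω] {P : Measure Ω} {X Y : Ω → ℝ}
    (hXY : HasGaussianLaw (fun ω => (X ω, Y ω)) P) (hX : HasLaw X (gaussianReal 0 1) P)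
    (hY : HasLaw Y (gaussianReal 0 1) P) (q : ℕ) :
    ∫ ω, Polynomial.aeval (X ω) (Polynomial.hermite q)
        * Polynomial.aeval (Y ω) (Polynomial.hermite q) ∂P
      = q.factorial * cov[X, Y; P] ^ q := by
  have : IsProbabilityMeasure P := hXY.isProbabilityMeasure
  set c := cov[X, Y; P]
  set Z : Ω → ℝ := fun ω => Y ω - c * X ω with hZ
  have hXX : cov[X, X; P] = 1 := by
    rw [covariance_self hX.aemeasurable, hX.variance_eq]
    simp
  have hcov : cov[X, Z; P] = 0 := by
    rw [hZ, covariance_fun_sub_right hXY.fst.memLp_two hXY.snd.memLp_two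
      (hXY.fst.memLp_two.const_mul c), covariance_const_mul_right, hXX]
    ring
  have hXZ : HasGaussianLaw (fun ω => (X ω, Z ω)) P :=
    hXY.map_fun ((ContinuousLinearMap.fst ℝ ℝ ℝ).prod
      (ContinuousLinearMap.snd ℝ ℝ ℝ - c • ContinuousLinearMap.fst ℝ ℝ ℝ))
  have hlaw : HasLaw (fun ω => (X ω, Z ω)) ((gaussianReal 0 1).prod (P.map Z)) P :=
    (hXZ.indepFun_of_covariance_eq_zero hcov).hasLaw_prod hX ⟨hXZ.snd.aemeasurable, rfl⟩
  set F : ℝ × ℝ → ℝ := fun p => Polynomial.aeval p.1 (Polynomial.hermite q)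
    * Polynomial.aeval (c * p.1 + p.2) (Polynomial.hermite q) with hF
  have hFm : Measurable F := by fun_prop
  have hFXZ : (fun ω => Polynomial.aeval (X ω) (Polynomial.hermite q)
      * Polynomial.aeval (Y ω) (Polynomial.hermite q)) = F ∘ fun ω => (X ω, Z ω) := by
    ext ω
    simp [hF, hZ]
  have hFint : Integrable F ((gaussianReal 0 1).prod (P.map Z)) := by
    rw [← hlaw.map_eq, integrable_map_measure hFm.aestronglyMeasurable hlaw.aemeasurable, ← hFXZ]
    exact (memLp_two_hermite hX q).integrable_mul (memLp_two_hermite hY q)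
  have : IsProbabilityMeasure (P.map Z) := Measure.isProbabilityMeasure_map hXZ.snd.aemeasurable
  rw [hFXZ, hlaw.integral_comp hFm.aestronglyMeasurable, integral_prod_symm F hFint]
  simp [hF, integral_hermite_mul_hermite_linear]

end Hermite

section HermiteSum

variable {Ω ι : Type*} [MeasurableSpace Ω] {P : Measure Ω} [Fintype ι] {X : ι → Ω → ℝ}

lemma integral_sum_hermite_sq (hX : HasGaussianLaw (fun ω i => X i ω) P)
    (hlaw : ∀ i, HasLaw (X i) (gaussianReal 0 1) P) (q : ℕ) :
    ∫ ω, (∑ i, Polynomial.aeval (X i ω) (Polynomial.hermite q)) ^ 2 ∂P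
      = q.factorial * ∑ i, ∑ j, cov[X i, X j; P] ^ q := by
  have hint (i j : ι) : Integrable (fun ω => Polynomial.aeval (X i ω) (Polynomial.hermite q)
      * Polynomial.aeval (X j ω) (Polynomial.hermite q)) P :=
    (memLp_two_hermite (hlaw i) q).integrable_mul (memLp_two_hermite (hlaw j) q)
  simp_rw [sq, Finset.sum_mul_sum, Finset.mul_sum]
  rw [integral_finsetSum _ fun i _ => integrable_finsetSum _ fun j _ => hint i j]
  refine Finset.sum_congr rfl fun i _ => ?_
  rw [integral_finsetSum _ fun j _ => hint i j]
  exact Finset.sum_congr rfl fun j _ =>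
    integral_hermite_mul_hermite (hX.prodMk i j) (hlaw i) (hlaw j) q

lemma isTrigOnEllipses_sum_hermite (q : ℕ) : IsTrigOnEllipses q
    fun v : ι → ℝ => ∑ i, Polynomial.aeval (v i) (Polynomial.hermite q) := by
  intro x y
  refine IsTrigPolynomial.sum _ fun i _ => ?_
  have h := (IsTrigPolynomial.cos_add_sin (x i) (y i)).polynomial_eval
    ((Polynomial.hermite q).map (Int.castRingHom ℝ))
  simp only [← algebraMap_int_eq, Polynomial.eval_map_algebraMap] at h
  exact h.mono (Polynomial.natDegree_map_le.trans_eq Polynomial.natDegree_hermite)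

end HermiteSum

theorem exists_forall_measureReal_abs_sum_hermite_le_le (q : ℕ) {τ : ℝ} (hτ : 0 < τ) :
    ∃ δ : ℝ, 0 < δ ∧ ∀ {Ω ι : Type*} [MeasurableSpace Ω] {P : Measure Ω} [Fintype ι]
      {X : ι → Ω → ℝ}, HasGaussianLaw (fun ω i => X i ω) P →
      (∀ i, HasLaw (X i) (gaussianReal 0 1) P) →
      ∀ σ > 0, q.factorial * ∑ i, ∑ j, cov[X i, X j; P] ^ q = σ ^ 2 →
      P.real {ω | |∑ i, Polynomial.aeval (X i ω) (Polynomial.hermite q)| ≤ δ * σ} ≤ τ := by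
  obtain ⟨δ, hδ, h⟩ := exists_forall_measureReal_abs_le_le q hτ
  refine ⟨δ, hδ, fun {Ω ι} _ {P} _ {X} hX hlaw σ hσ hvar => ?_⟩
  set F : (ι → ℝ) → ℝ := fun v => ∑ i, Polynomial.aeval (v i) (Polynomial.hermite q)
  have hFm : Measurable F := by fun_prop
  have hmap : HasLaw (fun ω i => X i ω) (P.map fun ω i => X i ω) P := ⟨hX.aemeasurable, rfl⟩
  have := hX.isProbabilityMeasure
  have := hX.isGaussian_map
  have hmean : (P.map fun ω i => X i ω)[id] = 0 := by
    ext i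
    rw [eval_integral (f := id) (IsGaussian.integrable_id.eval ·)]
    exact (hmap.integral_comp (f := fun v => v i)
      (measurable_pi_apply i).aestronglyMeasurable).symm.trans
        ((hlaw i).integral_eq.trans integral_id_gaussianReal)
  have hsq : ∫ v, F v ^ 2 ∂(P.map fun ω i => X i ω) = σ ^ 2 := by
    rw [← hvar, ← integral_sum_hermite_sq hX hlaw,
      ← hmap.integral_comp (hFm.pow_const 2).aestronglyMeasurable]
    rfl
  have hL2 : MemLp F 2 (P.map fun ω i => X i ω) :=
    (memLp_map_measure_iff hFm.aestronglyMeasurable hmap.aemeasurable).2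
      (memLp_finsetSum _ fun i _ => memLp_two_hermite (hlaw i) q)
  have hball := h (IsGaussian.map_rotation_eq_self hmean) (isTrigOnEllipses_sum_hermite q) hFm hL2
    σ hσ hsq
  rwa [hmap.measureReal_eq (p := fun v => |F v| ≤ δ * σ)
    (measurableSet_le hFm.abs measurable_const)]

section FractionalGaussianNoise

lemma abs_add_one_rpow_sub_rpow_le {b x : ℝ} (hb : b ≤ 1) (hx : 0 < x) :
    |(x + 1) ^ b - x ^ b| ≤ |b| * x ^ (b - 1) := by
  have hderiv : ∀ y ∈ Set.Icc x (x + 1),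
      HasDerivWithinAt (fun y => y ^ b) (b * y ^ (b - 1)) (Set.Icc x (x + 1)) y := fun y hy =>
    (hasDerivAt_rpow_const (Or.inl (hx.trans_le hy.1).ne')).hasDerivWithinAt
  have hbound : ∀ y ∈ Set.Icc x (x + 1), ‖b * y ^ (b - 1)‖ ≤ |b| * x ^ (b - 1) := fun y hy => by
    rw [norm_mul, norm_eq_abs, norm_of_nonneg (rpow_nonneg (hx.le.trans hy.1) _)]
    exact mul_le_mul_of_nonneg_left (rpow_le_rpow_of_nonpos hx hy.1 (by linarith)) (abs_nonneg b)
  simpa using (convex_Icc x (x + 1)).norm_image_sub_le_of_norm_hasDerivWithin_le hderiv hbound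
    (Set.left_mem_Icc.2 (by linarith)) (Set.right_mem_Icc.2 (by linarith))

lemma abs_add_two_rpow_add_rpow_sub_le {b x : ℝ} (hb : b ≤ 2) (hx : 0 < x) :
    |(x + 2) ^ b + x ^ b - 2 * (x + 1) ^ b| ≤ |b| * |b - 1| * x ^ (b - 2) := by
  have hderiv : ∀ y ∈ Set.Icc x (x + 1), HasDerivWithinAt (fun y => (y + 1) ^ b - y ^ b)
      (b * ((y + 1) ^ (b - 1) - y ^ (b - 1))) (Set.Icc x (x + 1)) y := fun y hy => by
    have hy0 : 0 < y := hx.trans_le hy.1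
    have hshift := (hasDerivAt_rpow_const (p := b)
      (Or.inl (show y + 1 ≠ 0 by linarith))).comp_add_const y 1
    exact ((hshift.sub (hasDerivAt_rpow_const (Or.inl hy0.ne'))).congr_deriv
      (by ring)).hasDerivWithinAt
  have hbound : ∀ y ∈ Set.Icc x (x + 1),
      ‖b * ((y + 1) ^ (b - 1) - y ^ (b - 1))‖ ≤ |b| * |b - 1| * x ^ (b - 2) := fun y hy => by
    rw [norm_mul, norm_eq_abs, norm_eq_abs, mul_assoc]
    gcongr
    calc |(y + 1) ^ (b - 1) - y ^ (b - 1)| ≤ |b - 1| * y ^ (b - 1 - 1) :=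
          abs_add_one_rpow_sub_rpow_le (by linarith) (hx.trans_le hy.1)
      _ ≤ |b - 1| * x ^ (b - 2) := by
          rw [show b - 1 - 1 = b - 2 by ring]
          exact mul_le_mul_of_nonneg_left (rpow_le_rpow_of_nonpos hx hy.1 (by linarith))
            (abs_nonneg _)
  have hmvt := (convex_Icc x (x + 1)).norm_image_sub_le_of_norm_hasDerivWithin_le hderiv hbound
    (Set.left_mem_Icc.2 (by linarith)) (Set.right_mem_Icc.2 (by linarith))
  rw [add_sub_cancel_left, norm_one, mul_one, norm_eq_abs] at hmvt
  convert hmvt using 2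
  rw [show x + 1 + 1 = x + 2 by ring]
  ring

/-- The covariance function `j ↦ E (B₁ (B_{j+1} - B_j))` of fractional Gaussian noise, the
stationary sequence of unit increments of a fractional Brownian motion `B` with Hurst
parameter `H`. -/
noncomputable def fgnCov (H : ℝ) (j : ℤ) : ℝ :=
  (|(j : ℝ) + 1| ^ (2 * H) + |(j : ℝ) - 1| ^ (2 * H) - 2 * |(j : ℝ)| ^ (2 * H)) / 2

variable {H : ℝ}

lemma fgnCov_neg (H : ℝ) (j : ℤ) : fgnCov H (-j) = fgnCov H j := by
  simp only [fgnCov, Int.cast_neg, abs_neg, neg_add_eq_sub, abs_sub_comm (1 : ℝ),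
    ← neg_add', add_comm (|(j : ℝ) - 1| ^ (2 * H))]

lemma fgnCov_zero (hH : H ≠ 0) : fgnCov H 0 = 1 := by
  simp [fgnCov, zero_rpow (mul_ne_zero two_ne_zero hH)]

lemma fgnCov_add_one (H : ℝ) (j : ℕ) : fgnCov H (j + 1) =
    (((j : ℝ) + 2) ^ (2 * H) + (j : ℝ) ^ (2 * H) - 2 * ((j : ℝ) + 1) ^ (2 * H)) / 2 := by
  have h (x : ℝ) (hx : 0 ≤ x) : |(j : ℝ) + x| = j + x := abs_of_nonneg (by positivity)
  simp only [fgnCov, Int.cast_add, Int.cast_natCast, Int.cast_one, add_assoc, one_add_one_eq_two,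
    add_sub_cancel_right, h 2 zero_le_two, h 1 zero_le_one, Nat.abs_cast]

lemma fgnCov_add_one_nonneg (hH : 1 / 2 ≤ H) (j : ℕ) : 0 ≤ fgnCov H (j + 1) := by
  have hconv := (convexOn_rpow (show 1 ≤ 2 * H by linarith)).2 (Set.mem_Ici.2 j.cast_nonneg)
    (Set.mem_Ici.2 (show (0 : ℝ) ≤ j + 2 by positivity)) (show (0 : ℝ) ≤ 1 / 2 by norm_num)
    (show (0 : ℝ) ≤ 1 / 2 by norm_num) (by norm_num)
  simp only [smul_eq_mul, show 1 / 2 * (j : ℝ) + 1 / 2 * (j + 2) = j + 1 by ring] at hconv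
  rw [fgnCov_add_one]
  linarith

lemma fgnCov_add_one_nonpos (hH0 : 0 ≤ H) (hH : H ≤ 1 / 2) (j : ℕ) : fgnCov H (j + 1) ≤ 0 := by
  have hconc := (concaveOn_rpow (show 0 ≤ 2 * H by linarith) (show 2 * H ≤ 1 by linarith)).2
    (Set.mem_Ici.2 j.cast_nonneg) (Set.mem_Ici.2 (show (0 : ℝ) ≤ j + 2 by positivity))
    (show (0 : ℝ) ≤ 1 / 2 by norm_num) (show (0 : ℝ) ≤ 1 / 2 by norm_num) (by norm_num)
  simp only [smul_eq_mul, show 1 / 2 * (j : ℝ) + 1 / 2 * (j + 2) = j + 1 by ring] at hconc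
  rw [fgnCov_add_one]
  linarith

lemma sum_fgnCov_add_one (hH : H ≠ 0) (N : ℕ) : ∑ j ∈ Finset.range N, fgnCov H (j + 1) =
    (((N : ℝ) + 1) ^ (2 * H) - (N : ℝ) ^ (2 * H) - 1) / 2 := by
  induction N with
  | zero => simp [zero_rpow (mul_ne_zero two_ne_zero hH)]
  | succ N ih =>
    rw [Finset.sum_range_succ, ih, fgnCov_add_one, Nat.cast_succ, add_assoc (N : ℝ) 1 1,
      one_add_one_eq_two]
    ring

lemma sum_abs_fgnCov_add_one_le (hH0 : 0 < H) (hH : H ≤ 1 / 2) (N : ℕ) :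
    ∑ j ∈ Finset.range N, |fgnCov H (j + 1)| ≤ 1 / 2 := by
  simp_rw [abs_of_nonpos (fgnCov_add_one_nonpos hH0.le hH _)]
  rw [Finset.sum_neg_distrib, sum_fgnCov_add_one hH0.ne']
  have hmono : (N : ℝ) ^ (2 * H) ≤ ((N : ℝ) + 1) ^ (2 * H) :=
    rpow_le_rpow (by positivity) (by linarith) (by linarith)
  linarith

lemma abs_fgnCov_add_one_le_half (hH0 : 0 < H) (hH : H ≤ 1 / 2) (j : ℕ) :
    |fgnCov H (j + 1)| ≤ 1 / 2 :=
  (Finset.single_le_sum (f := fun j : ℕ => |fgnCov H (j + 1)|) (fun _ _ => abs_nonneg _)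
    (Finset.self_mem_range_succ j)).trans (sum_abs_fgnCov_add_one_le hH0 hH (j + 1))

lemma abs_fgnCov_add_one_le (hH : H ≤ 1) {j : ℕ} (hj : 0 < j) :
    |fgnCov H (j + 1)| ≤ |2 * H| * |2 * H - 1| / 2 * (j : ℝ) ^ (2 * H - 2) := by
  rw [fgnCov_add_one, abs_div, abs_two, div_mul_eq_mul_div]
  gcongr
  exact abs_add_two_rpow_add_rpow_sub_le (by linarith) (by positivity)

lemma summable_abs_fgnCov_pow {q : ℕ} (hq : 0 < q) (hH : H < 1 - 1 / (2 * q)) :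
    Summable fun j : ℕ => |fgnCov H (j + 1)| ^ q := by
  have hq' : (0 : ℝ) < q := by exact_mod_cast hq
  have hexp : (2 * H - 2) * q < -1 := by
    rw [lt_sub_iff_add_lt, ← lt_sub_iff_add_lt', div_lt_iff₀ (by positivity)] at hH
    linarith
  have hH1 : H ≤ 1 := hH.le.trans (sub_le_self _ (by positivity))
  refine Summable.of_norm_bounded_eventually_nat
    ((summable_nat_rpow.2 hexp).mul_left ((|2 * H| * |2 * H - 1| / 2) ^ q)) ?_
  filter_upwards [eventually_gt_atTop 0] with j hj
  rw [norm_pow, norm_eq_abs, abs_abs, rpow_mul j.cast_nonneg, rpow_natCast, ← mul_pow]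
  gcongr
  exact abs_fgnCov_add_one_le hH1 hj

lemma sum_range_even_sub_le {g : ℤ → ℝ} (hg : ∀ j, g (-j) = g j) {S : ℝ}
    (hS : ∀ N : ℕ, ∑ j ∈ Finset.range N, g (j + 1) ≤ S) {n k : ℕ} (hk : k < n) :
    ∑ l ∈ Finset.range n, g (k - l) ≤ g 0 + 2 * S := by
  obtain ⟨m, rfl⟩ : ∃ m, n = (k + 1) + m := Nat.exists_eq_add_of_le hk
  have hbefore : ∑ l ∈ Finset.range (k + 1), g (k - l)
      = ∑ j ∈ Finset.range k, g (j + 1) + g 0 := by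
    rw [← Finset.sum_range_reflect, Finset.sum_range_succ']
    congr 1
    · refine Finset.sum_congr rfl fun j hj => ?_
      have := Finset.mem_range.1 hj
      congr 1
      omega
    · simp
  have hafter : ∑ l ∈ Finset.range m, g (k - (k + 1 + l : ℕ))
      = ∑ j ∈ Finset.range m, g (j + 1) := by
    refine Finset.sum_congr rfl fun j _ => ?_
    rw [← hg]
    congr 1
    omega
  rw [Finset.sum_range_add, hbefore, hafter]
  linarith [hS k, hS m]

lemma exists_sum_sum_fgnCov_pow_le {q : ℕ} (hq : 0 < q) (hH0 : H ≠ 0)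
    (hH : H < 1 - 1 / (2 * q)) :
    ∃ C : ℝ, ∀ n : ℕ, ∑ k : Fin n, ∑ l : Fin n, fgnCov H (k - l) ^ q ≤ C * n := by
  have hs := summable_abs_fgnCov_pow hq hH
  set T := ∑' j : ℕ, |fgnCov H (j + 1)| ^ q
  refine ⟨1 + 2 * T, fun n => ?_⟩
  have hrow (k : Fin n) : ∑ l : Fin n, fgnCov H (k - l) ^ q ≤ 1 + 2 * T := by
    rw [Fin.sum_univ_eq_sum_range (fun l : ℕ => fgnCov H (k - l) ^ q)]
    have h := sum_range_even_sub_le (g := fun j => fgnCov H j ^ q)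
      (fun j => by rw [fgnCov_neg]) (S := T) (fun N => ?_) k.2
    · simpa only [fgnCov_zero hH0, one_pow] using h
    · exact (Finset.sum_le_sum fun j _ => (le_abs_self _).trans_eq (abs_pow _ _)).trans
        (hs.sum_le_tsum _ fun _ _ => by positivity)
  exact (Finset.sum_le_card_nsmul _ _ _ fun k _ => hrow k).trans_eq
    (by rw [Finset.card_univ, Fintype.card_fin, nsmul_eq_mul, mul_comm])

lemma sum_neg_fgnCov_pow_le {q : ℕ} (hq : 2 ≤ q) (hH0 : 0 < H) (N : ℕ) :
    ∑ j ∈ Finset.range N, -fgnCov H (j + 1) ^ q ≤ 1 / 4 := by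
  rcases le_total (1 / 2) H with hH | hH
  · refine (Finset.sum_nonpos fun j _ => neg_nonpos.2 ?_).trans (by norm_num)
    exact pow_nonneg (fgnCov_add_one_nonneg hH j) q
  have hterm (j : ℕ) : -fgnCov H (j + 1) ^ q ≤ 1 / 2 * |fgnCov H (j + 1)| := by
    have hhalf := abs_fgnCov_add_one_le_half hH0 hH j
    calc -fgnCov H (j + 1) ^ q ≤ |fgnCov H (j + 1)| ^ q := (neg_le_abs _).trans_eq (abs_pow _ _)
      _ ≤ |fgnCov H (j + 1)| ^ 2 := pow_le_pow_of_le_one (abs_nonneg _) (by linarith) hq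
      _ ≤ 1 / 2 * |fgnCov H (j + 1)| := by rw [sq]; gcongr
  calc ∑ j ∈ Finset.range N, -fgnCov H (j + 1) ^ q
      ≤ ∑ j ∈ Finset.range N, 1 / 2 * |fgnCov H (j + 1)| := Finset.sum_le_sum fun j _ => hterm j
    _ ≤ 1 / 4 := by
        rw [← Finset.mul_sum]
        linarith [sum_abs_fgnCov_add_one_le hH0 hH N]

lemma half_mul_le_sum_sum_fgnCov_pow {q : ℕ} (hq : 2 ≤ q) (hH0 : 0 < H) (n : ℕ) :
    1 / 2 * (n : ℝ) ≤ ∑ k : Fin n, ∑ l : Fin n, fgnCov H (k - l) ^ q := by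
  have hrow (k : Fin n) : 1 / 2 ≤ ∑ l : Fin n, fgnCov H (k - l) ^ q := by
    rw [Fin.sum_univ_eq_sum_range (fun l : ℕ => fgnCov H (k - l) ^ q)]
    have h := sum_range_even_sub_le (g := fun j => -fgnCov H j ^ q)
      (fun j => by rw [fgnCov_neg]) (sum_neg_fgnCov_pow_le hq hH0) k.2
    rw [Finset.sum_neg_distrib, fgnCov_zero hH0.ne', one_pow] at h
    linarith
  simpa [mul_comm] using Finset.sum_le_sum fun k (_ : k ∈ Finset.univ) => hrow k

end FractionalGaussianNoise

section FractionalBrownianMotion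

variable {Ω : Type*} [MeasureSpace Ω] {B : ℝ → Ω → ℝ} {H : ℝ}

namespace IsFractionalBrownianMotion

lemma isGaussianProcess (hB : IsFractionalBrownianMotion B H) :
    IsGaussianProcess (fun t : NNReal => B t) := by
  refine ⟨fun I => ⟨isGaussian_of_map_eq_gaussianReal fun L => ?_⟩⟩
  obtain ⟨v, hv⟩ := hB.gaussian_fdd I.card (fun i => ((I.equivFin.symm i : NNReal) : ℝ))
    (fun _ => NNReal.coe_nonneg _) (fun i => L fun t => if I.equivFin.symm i = t then 1 else 0)
  refine ⟨0, v, ?_⟩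
  change (Measure.map (fun ω (t : I) => B t ω) ℙ).map L = _
  rw [← hv, Measure.map_map L.measurable (measurable_pi_lambda _ fun t => hB.measurable t)]
  congr 1
  ext ω
  rw [Equiv.sum_comp I.equivFin.symm fun s => L (fun t => if s = t then 1 else 0) * B s ω]
  exact (L.toLinearMap.pi_apply_eq_sum_univ _).trans
    (Finset.sum_congr rfl fun t _ => mul_comm _ _)

lemma integral_eq_zero (hB : IsFractionalBrownianMotion B H) (t : NNReal) :
    ∫ ω, B t ω = 0 := by
  obtain ⟨v, hv⟩ := hB.gaussian_fdd 1 (fun _ => t) (fun _ => t.coe_nonneg) (fun _ => 1)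
  have hlaw : HasLaw (B t) (gaussianReal 0 v) :=
    ⟨(hB.measurable t).aemeasurable, by simpa using hv⟩
  exact hlaw.integral_eq.trans integral_id_gaussianReal

lemma covariance_eq (hB : IsFractionalBrownianMotion B H) (s t : NNReal) :
    cov[B s, B t] = ((s : ℝ) ^ (2 * H) + (t : ℝ) ^ (2 * H) - |(t : ℝ) - s| ^ (2 * H)) / 2 := by
  have := hB.isGaussianProcess.isProbabilityMeasure
  rw [covariance_eq_sub (hB.isGaussianProcess.hasGaussianLaw_eval s).memLp_two
    (hB.isGaussianProcess.hasGaussianLaw_eval t).memLp_two, hB.integral_eq_zero, zero_mul,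
    sub_zero]
  exact hB.covariance s t s.coe_nonneg t.coe_nonneg

lemma covariance_sub_sub (hB : IsFractionalBrownianMotion B H) (s t h : NNReal) :
    cov[fun ω => B (s + h) ω - B s ω, fun ω => B (t + h) ω - B t ω]
      = (|(s : ℝ) - t + h| ^ (2 * H) + |(s : ℝ) - t - h| ^ (2 * H)
        - 2 * |(s : ℝ) - t| ^ (2 * H)) / 2 := by
  have := hB.isGaussianProcess.isProbabilityMeasure
  have hL2 (t : NNReal) : MemLp (B t) 2 := (hB.isGaussianProcess.hasGaussianLaw_eval t).memLp_two
  rw [← NNReal.coe_add, ← NNReal.coe_add,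
    covariance_fun_sub_fun_sub (hL2 _) (hL2 _) (hL2 _) (hL2 _)]
  simp only [hB.covariance_eq]
  simp only [NNReal.coe_add, add_sub_add_right_eq_sub]
  rw [abs_sub_comm (t : ℝ) s, ← abs_neg ((t : ℝ) - (s + h)), ← abs_neg ((t : ℝ) + h - s),
    show -((t : ℝ) - (s + h)) = s - t + h by ring, show -((t : ℝ) + h - s) = s - t - h by ring]
  ring

end IsFractionalBrownianMotion

/-- The increments `n ^ H * (B_{(k+1)/n} - B_{k/n})` to which the Hermite polynomial is applied in
`hermiteVariation`; they form a fractional Gaussian noise, the scaling making them standard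
normal. -/
noncomputable def normalizedIncrement (B : ℝ → Ω → ℝ) (H : ℝ) (n : ℕ) (k : Fin n) (ω : Ω) : ℝ :=
  (n : ℝ) ^ H * (B (((k : ℝ) + 1) / n) ω - B ((k : ℝ) / n) ω)

lemma hermiteVariation_eq_sum (B : ℝ → Ω → ℝ) (H : ℝ) (q n : ℕ) (ω : Ω) :
    hermiteVariation B H q n ω
      = ∑ k, Polynomial.aeval (normalizedIncrement B H n k ω) (Polynomial.hermite q) :=
  Finset.sum_range _

namespace IsFractionalBrownianMotion

lemma hasGaussianLaw_normalizedIncrement (hB : IsFractionalBrownianMotion B H) (n : ℕ) :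
    HasGaussianLaw (fun ω k => normalizedIncrement B H n k ω) ℙ := by
  have h := (hB.isGaussianProcess.hasGaussianLaw_increments
    (t := fun i : Fin (n + 1) => ((i : ℕ) : NNReal) / n)).fun_smul ((n : ℝ) ^ H)
  simpa [normalizedIncrement, Pi.smul_def] using h

lemma covariance_normalizedIncrement (hB : IsFractionalBrownianMotion B H) {n : ℕ}
    (k l : Fin n) :
    cov[normalizedIncrement B H n k, normalizedIncrement B H n l] = fgnCov H (k - l) := by
  have hn : (0 : ℝ) < n := by exact_mod_cast k.pos
  have h := hB.covariance_sub_sub (k / n) (l / n) (1 / n)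
  push_cast at h
  simp only [← sub_div, ← add_div] at h
  unfold normalizedIncrement fgnCov
  rw [covariance_const_mul_left, covariance_const_mul_right, h]
  simp only [abs_div, abs_of_pos hn, div_rpow (abs_nonneg _) hn.le]
  rw [two_mul H, rpow_add hn]
  push_cast
  field_simp

lemma hasLaw_normalizedIncrement (hB : IsFractionalBrownianMotion B H) (hH : H ≠ 0) {n : ℕ}
    (k : Fin n) : HasLaw (normalizedIncrement B H n k) (gaussianReal 0 1) := by
  have hlaw : HasGaussianLaw (normalizedIncrement B H n k) ℙ :=
    (hB.hasGaussianLaw_normalizedIncrement n).eval k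
  refine ⟨hlaw.aemeasurable, ?_⟩
  have hvar : Var[normalizedIncrement B H n k] = 1 := by
    rw [← covariance_self hlaw.aemeasurable, hB.covariance_normalizedIncrement, sub_self,
      fgnCov_zero hH]
  have hmean : ∫ ω, normalizedIncrement B H n k ω = 0 := by
    unfold normalizedIncrement
    have hint (t : NNReal) : Integrable (B t) :=
      (hB.isGaussianProcess.hasGaussianLaw_eval t).integrable
    have hsub := integral_sub (hint ((k + 1) / n)) (hint (k / n))
    rw [hB.integral_eq_zero, hB.integral_eq_zero, sub_zero] at hsub
    push_cast at hsub
    rw [integral_const_mul, hsub, mul_zero]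
  rw [hlaw.map_eq_gaussianReal, hvar, hmean, Real.toNNReal_one]

end IsFractionalBrownianMotion

end FractionalBrownianMotion

section Spitzer

lemma sum_range_one_div_eq_harmonic (N : ℕ) :
    ∑ n ∈ Finset.range N, 1 / ((n : ℝ) + 1) = harmonic N := by
  simp [harmonic]

lemma sum_range_one_div_mul_le {g : ℕ → ℝ} {c : ℝ} (hg0 : ∀ n, 0 ≤ g n) (hg1 : ∀ n, g n ≤ 1)
    (hgc : ∀ n : ℕ, g n ≤ c / (n + 1)) {N : ℕ} (hN : N ≠ 0) (M : ℕ) :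
    ∑ n ∈ Finset.range M, 1 / ((n : ℝ) + 1) * g n ≤ 1 + log N + c / N := by
  have hc : 0 ≤ c := by simpa using (hg0 0).trans (hgc 0)
  have hhead : ∑ n ∈ Finset.range N, 1 / ((n : ℝ) + 1) * g n ≤ 1 + log N :=
    calc ∑ n ∈ Finset.range N, 1 / ((n : ℝ) + 1) * g n
        ≤ ∑ n ∈ Finset.range N, 1 / ((n : ℝ) + 1) :=
          Finset.sum_le_sum fun n _ => mul_le_of_le_one_right (by positivity) (hg1 n)
      _ ≤ 1 + log N := by
          rw [sum_range_one_div_eq_harmonic]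
          exact harmonic_le_one_add_log N
  have htail : ∑ n ∈ Finset.Ico N (N + M), 1 / ((n : ℝ) + 1) * g n ≤ c / N :=
    calc ∑ n ∈ Finset.Ico N (N + M), 1 / ((n : ℝ) + 1) * g n
        ≤ ∑ n ∈ Finset.Ico N (N + M), c * (((n + 1 : ℕ) : ℝ) ^ 2)⁻¹ :=
          Finset.sum_le_sum fun n _ => by
            refine (mul_le_mul_of_nonneg_left (hgc n) (by positivity)).trans_eq ?_
            push_cast
            field_simp
      _ = c * ∑ n ∈ Finset.Ioc N (N + M), ((n : ℝ) ^ 2)⁻¹ := by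
          rw [← Finset.mul_sum, Finset.sum_Ico_add' (fun n : ℕ => ((n : ℝ) ^ 2)⁻¹),
            Finset.Ico_add_one_add_one_eq_Ioc]
      _ ≤ c * (N : ℝ)⁻¹ := by
          gcongr
          exact (sum_Ioc_inv_sq_le_sub hN (Nat.le_add_right N M)).trans
            (sub_le_self _ (by positivity))
      _ = c / N := (div_eq_mul_inv _ _).symm
  calc ∑ n ∈ Finset.range M, 1 / ((n : ℝ) + 1) * g n
      ≤ ∑ n ∈ Finset.range (N + M), 1 / ((n : ℝ) + 1) * g n :=
        Finset.sum_le_sum_of_subset_of_nonneg (Finset.range_subset_range.2 (Nat.le_add_left M N))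
          fun n _ _ => mul_nonneg (by positivity) (hg0 n)
    _ ≤ 1 + log N + c / N := by
        rw [← Finset.sum_range_add_sum_Ico _ (Nat.le_add_right N M)]
        exact add_le_add hhead htail

lemma summable_and_tsum_one_div_mul_le {g : ℕ → ℝ} {D ε : ℝ} (hg0 : ∀ n, 0 ≤ g n)
    (hg1 : ∀ n, g n ≤ 1) (hε0 : 0 < ε) (hε1 : ε ≤ 1)
    (hgD : ∀ n : ℕ, g n ≤ D / (ε ^ 2 * (n + 1))) :
    Summable (fun n : ℕ => 1 / ((n : ℝ) + 1) * g n) ∧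
      ∑' n : ℕ, 1 / ((n : ℝ) + 1) * g n ≤ 2 * -log ε + (1 + log 2 + D) := by
  have hD : 0 ≤ D := by
    have h0 := (hg0 0).trans (hgD 0)
    rwa [le_div_iff₀ (by positivity), zero_mul] at h0
  set N := ⌊(ε ^ 2)⁻¹⌋₊ + 1
  have hN : (ε ^ 2)⁻¹ < N := by simpa [N] using Nat.lt_floor_add_one (ε ^ 2)⁻¹
  have hN2 : (N : ℝ) ≤ 2 * (ε ^ 2)⁻¹ := by
    have hone : 1 ≤ (ε ^ 2)⁻¹ := (one_le_inv₀ (by positivity)).2 (pow_le_one₀ hε0.le hε1)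
    push_cast [N]
    rw [two_mul]
    exact add_le_add (Nat.floor_le (zero_le_one.trans hone)) hone
  have hlog : log N ≤ log 2 + 2 * -log ε :=
    (log_le_log (by positivity) hN2).trans_eq
      (by rw [log_mul two_ne_zero (by positivity), log_inv, log_pow]; push_cast; ring)
  have hDN : D / ε ^ 2 / N ≤ D := by
    rw [div_eq_mul_inv D, mul_div_assoc]
    exact mul_le_of_le_one_right hD ((div_le_one (by positivity)).2 hN.le)
  have hpartial (M : ℕ) : ∑ n ∈ Finset.range M, 1 / ((n : ℝ) + 1) * g n
      ≤ 2 * -log ε + (1 + log 2 + D) :=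
    (sum_range_one_div_mul_le hg0 hg1 (c := D / ε ^ 2)
      (fun n => (hgD n).trans_eq (div_div _ _ _).symm) (Nat.succ_ne_zero _ : N ≠ 0) M).trans
      (by linarith)
  have hnonneg (n : ℕ) : 0 ≤ 1 / ((n : ℝ) + 1) * g n := mul_nonneg (by positivity) (hg0 n)
  exact ⟨summable_of_sum_range_le hnonneg hpartial,
    Real.tsum_le_of_sum_range_le hnonneg hpartial⟩

lemma mul_log_le_tsum_one_div_mul {g : ℕ → ℝ} {a b ε : ℝ} (hg0 : ∀ n, 0 ≤ g n)
    (hsum : Summable fun n : ℕ => 1 / ((n : ℝ) + 1) * g n) (ha : 0 < a) (hb : 0 ≤ b) (hε : 0 < ε)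
    (hgb : ∀ n : ℕ, ε ^ 2 * (n + 1) ≤ a → b ≤ g n) :
    b * (2 * -log ε + log a) ≤ ∑' n : ℕ, 1 / ((n : ℝ) + 1) * g n := by
  set N := ⌊a / ε ^ 2⌋₊
  have hlog : 2 * -log ε + log a ≤ harmonic N :=
    calc 2 * -log ε + log a = log (a / ε ^ 2) := by
          rw [log_div ha.ne' (by positivity), log_pow]
          push_cast
          ring
      _ ≤ log (N + 1) := log_le_log (by positivity) (Nat.lt_floor_add_one _).le
      _ ≤ harmonic N := by exact_mod_cast log_add_one_le_harmonic N
  have hgN : ∀ n ∈ Finset.range N, b ≤ g n := fun n hn => by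
    refine hgb n ?_
    rw [← le_div_iff₀' (by positivity)]
    exact_mod_cast (Nat.le_floor_iff (by positivity)).1 (Finset.mem_range.1 hn)
  calc b * (2 * -log ε + log a) ≤ b * harmonic N := by gcongr
    _ = ∑ n ∈ Finset.range N, 1 / ((n : ℝ) + 1) * b := by
        rw [← sum_range_one_div_eq_harmonic, mul_comm, Finset.sum_mul]
    _ ≤ ∑ n ∈ Finset.range N, 1 / ((n : ℝ) + 1) * g n :=
        Finset.sum_le_sum fun n hn => mul_le_mul_of_nonneg_left (hgN n hn) (by positivity)
    _ ≤ ∑' n : ℕ, 1 / ((n : ℝ) + 1) * g n :=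
        hsum.sum_le_tsum _ fun n _ => mul_nonneg (by positivity) (hg0 n)

theorem tendsto_tsum_one_div_mul_div_neg_log {f : ℝ → ℕ → ℝ} {D : ℝ} (hf0 : ∀ ε n, 0 ≤ f ε n)
    (hf1 : ∀ ε n, f ε n ≤ 1) (hfD : ∀ ε > 0, ∀ n : ℕ, f ε n ≤ D / (ε ^ 2 * (n + 1)))
    (hflow : ∀ τ > (0 : ℝ), ∃ a > (0 : ℝ), ∀ ε > (0 : ℝ), ∀ n : ℕ,
      ε ^ 2 * (n + 1) ≤ a → 1 - τ ≤ f ε n) :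
    Tendsto (fun ε : ℝ => 1 / (-log ε) * ∑' n : ℕ, 1 / ((n : ℝ) + 1) * f ε n) (𝓝[>] 0)
      (𝓝 2) := by
  have hlogtop : Tendsto (fun ε : ℝ => -log ε) (𝓝[>] 0) atTop :=
    tendsto_neg_atBot_atTop.comp tendsto_log_nhdsGT_zero
  have hsmall : ∀ᶠ ε : ℝ in 𝓝[>] 0, ε ∈ Set.Ioo (0 : ℝ) 1 := Ioo_mem_nhdsGT one_pos
  have hlogpos {ε : ℝ} (hε : ε ∈ Set.Ioo (0 : ℝ) 1) : 0 < -log ε := neg_pos.2 (log_neg hε.1 hε.2)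
  have hbounds {ε : ℝ} (hε : ε ∈ Set.Ioo (0 : ℝ) 1) :=
    summable_and_tsum_one_div_mul_le (hf0 ε) (hf1 ε) hε.1 hε.2.le (hfD ε hε.1)
  refine tendsto_order.2 ⟨fun x hx => ?_, fun x hx => ?_⟩
  · obtain ⟨τ, hτ0, hτ⟩ := exists_between (lt_min one_pos (sub_pos.2 ((div_lt_one two_pos).2 hx)))
    obtain ⟨hτ1, hτx⟩ := lt_min_iff.1 hτ
    have hτ2 : x < (1 - τ) * 2 := by linarith
    obtain ⟨a, ha, hlow⟩ := hflow τ hτ0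
    have hlim : Tendsto (fun ε : ℝ => (1 - τ) * (2 + log a / -log ε)) (𝓝[>] 0)
        (𝓝 ((1 - τ) * (2 + 0))) :=
      ((hlogtop.const_div_atTop (log a)).const_add 2).const_mul (1 - τ)
    rw [add_zero] at hlim
    filter_upwards [hlim.eventually_const_lt hτ2, hsmall] with ε hlt hε
    have hpos := hlogpos hε
    have hge := mul_log_le_tsum_one_div_mul (hf0 ε) (hbounds hε).1 ha (sub_nonneg.2 hτ1.le) hε.1
      (hlow ε hε.1)
    rw [one_div_mul_eq_div, lt_div_iff₀ hpos]
    refine lt_of_lt_of_le ?_ hge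
    refine (mul_lt_mul_of_pos_right hlt hpos).trans_eq ?_
    rw [mul_assoc, add_mul, div_mul_cancel₀ _ hpos.ne']
  · have hlim : Tendsto (fun ε : ℝ => 2 + (1 + log 2 + D) / -log ε) (𝓝[>] 0) (𝓝 (2 + 0)) :=
      (hlogtop.const_div_atTop _).const_add 2
    rw [add_zero] at hlim
    filter_upwards [hlim.eventually_lt_const hx, hsmall] with ε hlt hε
    have hpos := hlogpos hε
    rw [one_div_mul_eq_div, div_lt_iff₀ hpos]
    refine (hbounds hε).2.trans_lt ((mul_lt_mul_of_pos_right hlt hpos).trans_eq' ?_)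
    rw [add_mul, div_mul_cancel₀ _ hpos.ne']

end Spitzer

section SpitzerInProbability

variable {Ω : Type*} [MeasurableSpace Ω] {P : Measure Ω} [IsProbabilityMeasure P]

lemma measureReal_lt_abs_le_integral_sq_div {X : Ω → ℝ} (hX : MemLp X 2 P) {r : ℝ} (hr : 0 < r) :
    P.real {ω | r < |X ω|} ≤ (∫ ω, X ω ^ 2 ∂P) / r ^ 2 := by
  rw [le_div_iff₀' (by positivity)]
  calc r ^ 2 * P.real {ω | r < |X ω|} ≤ r ^ 2 * P.real {ω | r ^ 2 ≤ X ω ^ 2} := by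
        refine mul_le_mul_of_nonneg_left (measureReal_mono ?_) (sq_nonneg r)
        exact Set.ofPred_subset_ofPred.2 fun ω hω => sq_le_sq.2 ((abs_of_pos hr).trans_le hω.le)
    _ ≤ ∫ ω, X ω ^ 2 ∂P :=
        mul_meas_ge_le_integral_of_nonneg (.of_forall fun ω => sq_nonneg _) hX.integrable_sq _

theorem tendsto_tsum_one_div_mul_measureReal_div_neg_log {V : ℕ → Ω → ℝ} {D : ℝ}
    (hV : ∀ n, MemLp (V n) 2 P) (hD : ∀ n : ℕ, ∫ ω, V n ω ^ 2 ∂P ≤ D * n)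
    (hsmall : ∀ τ > (0 : ℝ), ∃ δ > (0 : ℝ), ∀ n : ℕ, n ≠ 0 → P.real {ω | |V n ω| ≤ δ * √n} ≤ τ) :
    Tendsto (fun ε : ℝ => 1 / (-log ε) * ∑' n : ℕ, 1 / ((n : ℝ) + 1)
      * P.real {ω | ε * (n + 1) < |V (n + 1) ω|}) (𝓝[>] 0) (𝓝 2) := by
  refine tendsto_tsum_one_div_mul_div_neg_log (D := D) (fun _ _ => measureReal_nonneg)
    (fun _ _ => measureReal_le_one) (fun ε hε n => ?_) fun τ hτ => ?_
  · refine (measureReal_lt_abs_le_integral_sq_div (hV (n + 1)) (by positivity)).trans ?_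
    calc (∫ ω, V (n + 1) ω ^ 2 ∂P) / (ε * (n + 1)) ^ 2
        ≤ D * (n + 1) / (ε * (n + 1)) ^ 2 := by
          gcongr
          exact_mod_cast hD (n + 1)
      _ = D / (ε ^ 2 * (n + 1)) := by field_simp
  · obtain ⟨δ, hδ, hle⟩ := hsmall τ hτ
    refine ⟨δ ^ 2, by positivity, fun ε hε n hn => ?_⟩
    have hthreshold : ε * (n + 1) ≤ δ * √((n + 1 : ℕ) : ℝ) := by
      rw [← sq_le_sq₀ (by positivity) (by positivity), mul_pow, mul_pow, sq_sqrt (by positivity)]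
      push_cast
      nlinarith
    have hcompl : {ω | ε * (n + 1) < |V (n + 1) ω|}ᶜ
        ⊆ {ω | |V (n + 1) ω| ≤ δ * √((n + 1 : ℕ) : ℝ)} :=
      fun ω hω => (not_lt.1 (Set.notMem_ofPred_iff.1 hω)).trans hthreshold
    have hmeas : NullMeasurableSet {ω | ε * (n + 1) < |V (n + 1) ω|} P :=
      nullMeasurableSet_lt aemeasurable_const (hV (n + 1)).aestronglyMeasurable.aemeasurable.abs
    have hle_compl := (measureReal_mono hcompl).trans (hle (n + 1) n.succ_ne_zero)
    rw [probReal_compl_eq_one_sub₀ hmeas] at hle_compl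
    linarith

end SpitzerInProbability

section HermiteVariation

variable {Ω : Type*} [MeasureSpace Ω] {B : ℝ → Ω → ℝ} {H : ℝ}

namespace IsFractionalBrownianMotion

lemma memLp_two_hermiteVariation (hB : IsFractionalBrownianMotion B H) (hH : H ≠ 0) (q n : ℕ) :
    MemLp (hermiteVariation B H q n) 2 := by
  rw [funext (hermiteVariation_eq_sum B H q n)]
  exact memLp_finsetSum _ fun k _ => memLp_two_hermite (hB.hasLaw_normalizedIncrement hH k) q

lemma integral_hermiteVariation_sq (hB : IsFractionalBrownianMotion B H) (hH : H ≠ 0) (q n : ℕ) :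
    ∫ ω, hermiteVariation B H q n ω ^ 2
      = q.factorial * ∑ k : Fin n, ∑ l : Fin n, fgnCov H (k - l) ^ q := by
  simp only [hermiteVariation_eq_sum, hB.covariance_normalizedIncrement,
    integral_sum_hermite_sq (hB.hasGaussianLaw_normalizedIncrement n)
      (hB.hasLaw_normalizedIncrement hH)]

lemma exists_integral_hermiteVariation_sq_le (hB : IsFractionalBrownianMotion B H) {q : ℕ}
    (hq : 0 < q) (hH0 : H ≠ 0) (hH1 : H < 1 - 1 / (2 * q)) :
    ∃ D : ℝ, ∀ n : ℕ, ∫ ω, hermiteVariation B H q n ω ^ 2 ≤ D * n := by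
  obtain ⟨C, hC⟩ := exists_sum_sum_fgnCov_pow_le hq hH0 hH1
  refine ⟨q.factorial * C, fun n => ?_⟩
  rw [hB.integral_hermiteVariation_sq hH0, mul_assoc]
  exact mul_le_mul_of_nonneg_left (hC n) (Nat.cast_nonneg _)

lemma half_mul_le_integral_hermiteVariation_sq (hB : IsFractionalBrownianMotion B H) {q : ℕ}
    (hq : 2 ≤ q) (hH : 0 < H) (n : ℕ) :
    1 / 2 * n ≤ ∫ ω, hermiteVariation B H q n ω ^ 2 := by
  rw [hB.integral_hermiteVariation_sq hH.ne']
  have hsum := half_mul_le_sum_sum_fgnCov_pow hq hH n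
  exact hsum.trans (le_mul_of_one_le_left ((by positivity : (0 : ℝ) ≤ 1 / 2 * n).trans hsum)
    (by exact_mod_cast q.factorial_pos))

lemma exists_forall_measureReal_abs_hermiteVariation_le_le (hB : IsFractionalBrownianMotion B H)
    {q : ℕ} (hq : 2 ≤ q) (hH : 0 < H) {τ : ℝ} (hτ : 0 < τ) :
    ∃ δ > (0 : ℝ), ∀ n : ℕ, n ≠ 0 →
      (ℙ : Measure Ω).real {ω | |hermiteVariation B H q n ω| ≤ δ * √n} ≤ τ := by
  have := hB.isGaussianProcess.isProbabilityMeasure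
  obtain ⟨δ, hδ, hsmall⟩ := exists_forall_measureReal_abs_sum_hermite_le_le q hτ
  refine ⟨δ / 2, half_pos hδ, fun n hn => ?_⟩
  set σ := √(∫ ω, hermiteVariation B H q n ω ^ 2)
  have hσ : √n / 2 ≤ σ := by
    refine le_sqrt_of_sq_le (le_trans ?_ (hB.half_mul_le_integral_hermiteVariation_sq hq hH n))
    rw [div_pow, sq_sqrt (Nat.cast_nonneg n)]
    linarith [(Nat.cast_nonneg n : (0 : ℝ) ≤ n)]
  have hσ0 : 0 < σ := lt_of_lt_of_le (by positivity) hσ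
  calc (ℙ : Measure Ω).real {ω | |hermiteVariation B H q n ω| ≤ δ / 2 * √n}
      ≤ (ℙ : Measure Ω).real {ω | |hermiteVariation B H q n ω| ≤ δ * σ} := by
        refine measureReal_mono (Set.ofPred_subset_ofPred.2 fun ω hω => hω.trans ?_)
        rw [div_mul_eq_mul_div, mul_div_assoc]
        gcongr
    _ ≤ τ := by
        simp only [hermiteVariation_eq_sum]
        refine hsmall (hB.hasGaussianLaw_normalizedIncrement n)
          (hB.hasLaw_normalizedIncrement hH.ne') σ hσ0 ?_
        simp only [hB.covariance_normalizedIncrement]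
        rw [← hB.integral_hermiteVariation_sq hH.ne',
          sq_sqrt (integral_nonneg fun ω => sq_nonneg _)]

end IsFractionalBrownianMotion

end HermiteVariation

theorem stmt_6 {Ω : Type*} [MeasureSpace Ω] [IsProbabilityMeasure (ℙ : Measure Ω)]
    (q : ℕ) (hq : 2 ≤ q) (H : ℝ) (hH0 : 0 < H) (hH1 : H < 1 - 1 / (2 * q))
    (B : ℝ → Ω → ℝ) (hB : IsFractionalBrownianMotion B H) :
    Tendsto
      (fun ε : ℝ =>
        (1 / (-Real.log ε)) *
          ∑' n : ℕ, (1 / ((n : ℝ) + 1)) *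
            (ℙ {ω | ε * ((n : ℝ) + 1) < |hermiteVariation B H q (n + 1) ω|}).toReal)
      (𝓝[>] 0) (𝓝 2) := by
  obtain ⟨D, hD⟩ := hB.exists_integral_hermiteVariation_sq_le (two_pos.trans_le hq) hH0.ne' hH1
  exact tendsto_tsum_one_div_mul_measureReal_div_neg_log
    (hB.memLp_two_hermiteVariation hH0.ne' q) hD
    fun τ hτ => hB.exists_forall_measureReal_abs_hermiteVariation_le_le hq hH0 hτ
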